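/- arXiv:2509.02495 — 2 statements merged into one kernel-verified Lean document; each statement's English description precedes it below -/
import Mathlib

section
/- Let Ω be a finite nonempty set, and let < and ≤ be binary relations on the powerset of Ω satisfying: (A0) ∅ < {ω} for every ω ∈ Ω; (A1) if A ≤ B then it is not the case that B < A; (A2) if A < B then A ≤ B; and (Scott) whenever (A_i)_{i≤n} ≡₀ (B_i)_{i≤n} and B_i ≤ A_i for all i ≤ n, then A_i ≤ B_i for all i ≤ n. Then there exists a regular probability measure μ on Ω such that for all A, B ⊆ Ω, A < B implies μ(A) < μ(B) and A ≤ B implies μ(A) ≤ μ(B). -/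
open Finset

variable {Ω : Type*}

/-- The measure of a finite set of states given weights `w`: `μ(A) = ∑_{ω ∈ A} w ω`. -/
noncomputable def mea (w : Ω → ℝ) (A : Finset Ω) : ℝ := ∑ ω ∈ A, w ω

/-- `w` is a probability weight function: nonnegative and summing to 1. -/
def IsProbWeight [Fintype Ω] (w : Ω → ℝ) : Prop :=
  (∀ ω, 0 ≤ w ω) ∧ (∑ ω, w ω) = 1

/-- The measure is regular: only the empty set has measure 0. -/
def RegularW (w : Ω → ℝ) : Prop := ∀ X : Finset Ω, mea w X = 0 → X = ∅

/-- Conditional measure `μ_A(X) = μ(A ∩ X) / μ(A)`. -/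
noncomputable def condMea [DecidableEq Ω] (w : Ω → ℝ) (A X : Finset Ω) : ℝ := mea w (A ∩ X) / mea w A

/-- `X` is `(m,t)`-stable for a set function `m`: `X` is nonempty and for every `E` with
`X ∩ E ≠ ∅` and `m E > 0`, `m (X ∩ E) / m E > t`. -/
def StableFor [DecidableEq Ω] (m : Finset Ω → ℝ) (t : ℝ) (X : Finset Ω) : Prop :=
  X.Nonempty ∧ ∀ E : Finset Ω, (X ∩ E).Nonempty → 0 < m E → t < m (X ∩ E) / m E

/-- `S` is the `⊆`-least `(m,t)`-stable set. -/
def IsLeastStable [DecidableEq Ω] (m : Finset Ω → ℝ) (t : ℝ) (S : Finset Ω) : Prop :=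
  StableFor m t S ∧ ∀ X : Finset Ω, StableFor m t X → S ⊆ X

/-- `w` represents the selection function `σ` for threshold `t`. -/
def RepresentsAt [DecidableEq Ω] (w : Ω → ℝ) (t : ℝ) (σ : Finset Ω → Finset Ω) : Prop :=
  ∀ E : Finset Ω, (0 < mea w E → IsLeastStable (condMea w E) t (σ E)) ∧
    (mea w E = 0 → σ E = ∅)

/-- Selection axiom (S1): `σ(X) = ∅` only if `X = ∅`. -/
def SelA1 (σ : Finset Ω → Finset Ω) : Prop := ∀ X : Finset Ω, σ X = ∅ → X = ∅

/-- Selection axiom (S2): `σ(X) ⊆ X`. -/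
def SelA2 (σ : Finset Ω → Finset Ω) : Prop := ∀ X : Finset Ω, σ X ⊆ X

/-- Selection axiom (S3): if `σ(A) ∩ B ≠ ∅` then `σ(A ∩ B) ⊆ σ(A) ∩ B`. -/
def SelA3 [DecidableEq Ω] (σ : Finset Ω → Finset Ω) : Prop :=
  ∀ A B : Finset Ω, (σ A ∩ B).Nonempty → σ (A ∩ B) ⊆ σ A ∩ B

/-- Selection axiom (S4ₙ) for every `n`: if `σ(A ∪ Xᵢ) = Xᵢ` for all `i`, then
`σ(A ∪ ⋃ᵢ Xᵢ) ⊆ ⋃ᵢ Xᵢ`. -/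
def SelA4 [DecidableEq Ω] (σ : Finset Ω → Finset Ω) : Prop :=
  ∀ n : ℕ, ∀ A : Finset Ω, ∀ X : Fin (n + 1) → Finset Ω,
    (∀ i, σ (A ∪ X i) = X i) →
    σ (A ∪ univ.biUnion X) ⊆ univ.biUnion X

/-- `ω ≻_σ X` iff `ω ∉ X` and `σ (X ∪ {ω}) = {ω}`. -/
def succS [DecidableEq Ω] (σ : Finset Ω → Finset Ω) (ω : Ω) (X : Finset Ω) : Prop :=
  ω ∉ X ∧ σ (X ∪ {ω}) = {ω}

/-- `X ⪰_σ ω` iff `ω ∈ X` or `σ (X ∪ {ω}) ≠ {ω}`. -/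
def succeqS [DecidableEq Ω] (σ : Finset Ω → Finset Ω) (X : Finset Ω) (ω : Ω) : Prop :=
  ω ∈ X ∨ σ (X ∪ {ω}) ≠ {ω}

/-- `A ⪰*_σ B` iff either `A` is a singleton `{a}` with `a ≻_σ B`, or `B` is a singleton
`{b}` with `A ⪰_σ b`. -/
def geStar [DecidableEq Ω] (σ : Finset Ω → Finset Ω) (A B : Finset Ω) : Prop :=
  (∃ a, A = {a} ∧ succS σ a B) ∨ (∃ b, B = {b} ∧ succeqS σ A b)

/-- Two sequences of sets are balanced: every state occurs in exactly as many `A i`'s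
as `B i`'s. -/
def BalancedSeq {n : ℕ} (A B : Fin n → Finset Ω) : Prop :=
  ∀ ω : Ω, Nat.card {i // ω ∈ A i} = Nat.card {i // ω ∈ B i}

/-- `(A_i) ≤₀ (B_i)`: every state occurs in at most as many `A i`'s as `B i`'s. -/
def DomSeq {n : ℕ} (A B : Fin n → Finset Ω) : Prop :=
  ∀ ω : Ω, Nat.card {i // ω ∈ A i} ≤ Nat.card {i // ω ∈ B i}

/-- The (Scott) axiom for the induced order `⪰*_σ`. -/
def ScottAx [DecidableEq Ω] (σ : Finset Ω → Finset Ω) : Prop :=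
  ∀ n : ℕ, ∀ A B : Fin (n + 1) → Finset Ω, BalancedSeq A B →
    (∀ i, geStar σ (A i) (B i)) → ∀ i, geStar σ (B i) (A i)

/-!
By a transposition theorem for finite systems of linear inequalities over `ℚ`, a rational weight
that is weakly monotone for `≤` and strictly monotone for `<` exists unless, for some `A < B`, the
functional `μ ↦ μ(A) - μ(B)` is a nonnegative rational combination of the functionals
`μ ↦ μ(D) - μ(C)` with `C ≤ D`. Clearing denominators makes it a sum of such functionals, possibly
repeated; together with the pair `(A, B)` they then form a balanced sequence, and (Scott) reverses
`A ≤ B`, contradicting (A1). By (A0) every state gets positive weight, so the weight can be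
normalized.
-/

section LinearInequalities

variable {𝕜 V ι : Type*} [Field 𝕜] [LinearOrder 𝕜] [IsStrictOrderedRing 𝕜] [AddCommGroup V]
  [Module 𝕜 V]

theorem apply_nonneg_of_mem_hull {S : Set (Module.Dual 𝕜 V)} {x : V} (hx : ∀ f ∈ S, 0 ≤ f x)
    {g : Module.Dual 𝕜 V} (hg : g ∈ PointedCone.hull 𝕜 S) : 0 ≤ g x := by
  have hS : PointedCone.hull 𝕜 S ≤ PointedCone.dual (Module.Dual.eval 𝕜 V) {x} :=
    Submodule.span_le.2 fun f hf ↦ by simpa using hx f hf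
  simpa using hS hg

theorem mem_hull_insert_of_dualMap_transvection_mem {S : Set (Module.Dual 𝕜 V)}
    {a b : Module.Dual 𝕜 V} {z : V} (hz : ∀ f ∈ S, 0 ≤ f z) (hbz : b z ≤ 0)
    (h : (LinearMap.transvection a z).dualMap b ∈
      PointedCone.hull 𝕜 ((LinearMap.transvection a z).dualMap '' S)) :
    b ∈ PointedCone.hull 𝕜 (insert a S) := by
  obtain ⟨g, hg, hgb⟩ : ∃ g ∈ PointedCone.hull 𝕜 S,
      (LinearMap.transvection a z).dualMap g = (LinearMap.transvection a z).dualMap b :=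
    PointedCone.mem_map.1 (by simpa only [PointedCone.map, Submodule.map_span] using! h)
  have hgz : b z ≤ g z := hbz.trans (apply_nonneg_of_mem_hull hz hg)
  have hb_eq : b = g + (g z - b z) • a := by
    ext x
    have hx : g x + a x * g z = b x + a x * b z := by
      simpa [LinearMap.transvection.apply] using LinearMap.congr_fun hgb x
    simp only [LinearMap.add_apply, LinearMap.smul_apply, smul_eq_mul]
    linear_combination -hx
  rw [hb_eq]
  exact add_mem (Submodule.span_mono (Set.subset_insert a S) hg)
    (PointedCone.smul_mem _ (sub_nonneg.2 hgz) (Submodule.subset_span (Set.mem_insert a S)))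

/-- Farkas' lemma. As `𝕜` need not be complete, the proof eliminates one inequality at a time
instead of separating `b` from the cone by a hyperplane. -/
theorem mem_hull_image_of_forall_nonneg {s : Set ι} (hs : s.Finite) (a : ι → Module.Dual 𝕜 V)
    (b : Module.Dual 𝕜 V) (h : ∀ x, (∀ i ∈ s, 0 ≤ a i x) → 0 ≤ b x) :
    b ∈ PointedCone.hull 𝕜 (a '' s) := by
  induction s, hs using Set.Finite.induction_on generalizing a b with
  | empty =>
    have hb : b = 0 := LinearMap.ext fun x ↦
      le_antisymm (by simpa using h (-x) (by simp)) (h x (by simp))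
    exact hb ▸ zero_mem _
  | @insert j s _ _ ih =>
    by_cases hb : ∀ x, (∀ i ∈ s, 0 ≤ a i x) → 0 ≤ b x
    · exact Submodule.span_mono (Set.image_mono (Set.subset_insert j s)) (ih a b hb)
    obtain ⟨z, hz, hbz, hjz⟩ : ∃ z, (∀ i ∈ s, 0 ≤ a i z) ∧ b z < 0 ∧ a j z = -1 := by
      push Not at hb
      obtain ⟨y, hy, hby⟩ := hb
      have hjy : a j y < 0 := by
        by_contra! hjy
        exact hby.not_ge (h y (Set.forall_mem_insert.2 ⟨hjy, hy⟩))
      have hc : 0 < (-a j y)⁻¹ := by simpa using hjy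
      refine ⟨(-a j y)⁻¹ • y, fun i hi ↦ ?_, ?_, ?_⟩
      · simpa using mul_nonneg hc.le (hy i hi)
      · simpa using mul_neg_of_pos_of_neg hc hby
      · simp [inv_neg, hjy.ne]
    refine Set.image_insert_eq ▸ mem_hull_insert_of_dualMap_transvection_mem (z := z)
      (by simpa using hz) hbz.le ?_
    -- Since `a j z = -1`, the transvection maps into `ker (a j)`, where the constraint `a j` is
    -- vacuous.
    rw [Set.image_image]
    exact ih _ _ fun x hx ↦ h _ (Set.forall_mem_insert.2
      ⟨by simp [LinearMap.transvection.apply, hjz], hx⟩)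

theorem exists_forall_nonneg_and_forall_pos {s t : Set ι} (hs : s.Finite) (hts : t ⊆ s)
    (a : ι → Module.Dual 𝕜 V) (h : ∀ i ∈ t, -a i ∉ PointedCone.hull 𝕜 (a '' s)) :
    ∃ x, (∀ i ∈ s, 0 ≤ a i x) ∧ ∀ i ∈ t, 0 < a i x := by
  have hx : ∀ i ∈ t, ∃ x, (∀ k ∈ s, 0 ≤ a k x) ∧ 0 < a i x := fun i hi ↦ by
    by_contra! hcon
    exact h i hi (mem_hull_image_of_forall_nonneg hs a _ fun x hx ↦ by simpa using hcon x hx)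
  choose! x hx_nonneg hx_pos using hx
  have ht : t.Finite := hs.subset hts
  refine ⟨∑ i ∈ ht.toFinset, x i, fun k hk ↦ ?_, fun k hk ↦ ?_⟩
  · rw [map_sum]
    exact sum_nonneg fun i hi ↦ hx_nonneg i (ht.mem_toFinset.1 hi) k hk
  · rw [map_sum]
    exact sum_pos' (fun i hi ↦ hx_nonneg i (ht.mem_toFinset.1 hi) k (hts hk))
      ⟨k, ht.mem_toFinset.2 hk, hx_pos k hk⟩

end LinearInequalities

section RationalCone

variable {V : Type*} [AddCommGroup V] [Module ℚ V] {S : Set V} {v : V}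

theorem exists_nsmul_mem_closure_of_mem_hull (hv : v ∈ PointedCone.hull ℚ S) :
    ∃ n : ℕ, n ≠ 0 ∧ n • v ∈ AddSubmonoid.closure S := by
  induction hv using Submodule.span_induction with
  | mem v hv => exact ⟨1, one_ne_zero, by simpa using AddSubmonoid.subset_closure hv⟩
  | zero => exact ⟨1, one_ne_zero, by simp⟩
  | add v w _ _ hv hw =>
    obtain ⟨m, hm, hmv⟩ := hv
    obtain ⟨n, hn, hnw⟩ := hw
    refine ⟨n * m, mul_ne_zero hn hm, ?_⟩
    rw [smul_add, mul_smul, mul_comm n m, mul_smul]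
    exact add_mem (nsmul_mem hmv n) (nsmul_mem hnw m)
  | smul q v _ hv =>
    obtain ⟨q, hq_nonneg⟩ := q
    obtain ⟨n, hn, hnv⟩ := hv
    lift q to ℚ≥0 using hq_nonneg
    have hq : (q.den * n) • (q : ℚ) • v = q.num • n • v := by
      simp only [← Nat.cast_smul_eq_nsmul ℚ, smul_smul]
      push_cast
      rw [mul_right_comm]
      congr 2
      exact_mod_cast q.den_mul_eq_num
    have hmem : (q.den * n) • (q : ℚ) • v ∈ AddSubmonoid.closure S := hq ▸ nsmul_mem hnv q.num
    exact ⟨q.den * n, mul_ne_zero q.den_ne_zero hn, hmem⟩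

theorem neg_mem_closure_of_neg_mem_hull (hvS : v ∈ S) (hv : -v ∈ PointedCone.hull ℚ S) :
    -v ∈ AddSubmonoid.closure S := by
  obtain ⟨n, hn, hnv⟩ := exists_nsmul_mem_closure_of_mem_hull hv
  obtain ⟨m, rfl⟩ := Nat.exists_eq_succ_of_ne_zero hn
  have hneg : -v = (m + 1) • -v + m • v := by module
  exact hneg ▸ add_mem hnv (nsmul_mem (AddSubmonoid.subset_closure hvS) m)

end RationalCone

section Cancellation

/-- The functional `x ↦ x(A) = ∑_{ω ∈ A} x ω` on rational weights. Weights are taken in `ℚ`, not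
`ℝ`, so that the coefficients in conic combinations can be cleared to integers. -/
def weightOn (A : Finset Ω) : Module.Dual ℚ (Ω → ℚ) := ∑ ω ∈ A, LinearMap.proj ω

theorem weightOn_apply (A : Finset Ω) (x : Ω → ℚ) : weightOn A x = ∑ ω ∈ A, x ω := by
  simp [weightOn]

/-- The functional `x ↦ x(B) - x(A)` attached to a pair `(A, B)`; a comparison `A ≤ B` is the
constraint that it be nonnegative. -/
def weightGap (p : Finset Ω × Finset Ω) : Module.Dual ℚ (Ω → ℚ) := weightOn p.2 - weightOn p.1

theorem balancedSeq_of_sum_weightOn_eq {n : ℕ} {A B : Fin n → Finset Ω}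
    (h : ∑ i, weightOn (A i) = ∑ i, weightOn (B i)) : BalancedSeq A B := by
  classical
  intro ω
  have hcard : ∀ C : Fin n → Finset Ω,
      (Nat.card {i // ω ∈ C i} : ℚ) = (∑ i, weightOn (C i)) (Pi.single ω 1) := fun C ↦ by
    simp [weightOn_apply, Pi.single_apply, Nat.card_eq_fintype_card, Fintype.card_subtype]
  exact_mod_cast (hcard A).trans (h ▸ (hcard B).symm)

/-- Scott's axiom for a comparison relation on events: comparisons that hold along a balanced
pair of sequences can all be reversed. -/
def ScottCancellation (le : Finset Ω → Finset Ω → Prop) : Prop :=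
  ∀ n : ℕ, ∀ A B : Fin (n + 1) → Finset Ω, BalancedSeq A B →
    (∀ i, le (B i) (A i)) → ∀ i, le (A i) (B i)

variable {lt le : Finset Ω → Finset Ω → Prop} {A B : Finset Ω}

theorem ScottCancellation.le_of_neg_weightGap_mem_closure (hScott : ScottCancellation le)
    (hAB : le A B)
    (hneg : -weightGap (A, B) ∈ AddSubmonoid.closure (weightGap '' {p | le p.1 p.2})) :
    le B A := by
  obtain ⟨l, hl, hsum⟩ := AddSubmonoid.exists_list_of_mem_closure hneg
  choose p hp hpl using fun i : Fin l.length ↦ hl (l.get i) (l.get_mem i)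
  let q : Fin (l.length + 1) → Finset Ω × Finset Ω := Fin.cons (A, B) p
  have hq : ∀ i, le (q i).1 (q i).2 := Fin.cases hAB hp
  have hgap : ∑ i, weightGap (q i) = 0 := by
    have hp_sum : ∑ i, weightGap (p i) = -weightGap (A, B) := by
      simp [hpl, hsum]
    simp [q, Fin.sum_univ_succ, hp_sum]
  have hbal : BalancedSeq (fun i ↦ (q i).2) fun i ↦ (q i).1 :=
    balancedSeq_of_sum_weightOn_eq <| sub_eq_zero.1 <| by
      simpa only [weightGap, sum_sub_distrib] using hgap
  exact hScott l.length _ _ hbal hq 0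

theorem ScottCancellation.exists_weight [Finite Ω] (hScott : ScottCancellation le)
    (hle : ∀ A B, le A B → ¬ lt B A) (hlt : ∀ A B, lt A B → le A B) :
    ∃ x : Ω → ℚ, (∀ A B, lt A B → weightOn A x < weightOn B x) ∧
      ∀ A B, le A B → weightOn A x ≤ weightOn B x := by
  let C : Set (Finset Ω × Finset Ω) := {p | le p.1 p.2}
  let S : Set (Finset Ω × Finset Ω) := {p | lt p.1 p.2}
  have hSC : S ⊆ C := fun p ↦ hlt p.1 p.2
  have hS : ∀ p ∈ S, -weightGap p ∉ PointedCone.hull ℚ (weightGap '' C) := fun p hp hneg ↦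
    hle p.2 p.1 (hScott.le_of_neg_weightGap_mem_closure (hSC hp)
      (neg_mem_closure_of_neg_mem_hull (Set.mem_image_of_mem weightGap (hSC hp)) hneg)) hp
  obtain ⟨x, hx_nonneg, hx_pos⟩ :=
    exists_forall_nonneg_and_forall_pos C.toFinite hSC weightGap hS
  exact ⟨x, fun A B h ↦ sub_pos.1 (hx_pos (A, B) h), fun A B h ↦ sub_nonneg.1 (hx_nonneg (A, B) h)⟩

end Cancellation

section Normalization

theorem mea_const_mul (c : ℝ) (w : Ω → ℝ) (A : Finset Ω) :
    mea (fun ω ↦ c * w ω) A = c * mea w A :=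
  (mul_sum A w c).symm

theorem mea_ratCast (x : Ω → ℚ) (A : Finset Ω) : mea (fun ω ↦ (x ω : ℝ)) A = weightOn A x := by
  simp [mea, weightOn_apply]

variable {w : Ω → ℝ}

theorem regularW_of_pos (hw : ∀ ω, 0 < w ω) : RegularW w := fun X hX ↦ by
  by_contra hne
  exact (sum_pos (fun ω _ ↦ hw ω) (nonempty_iff_ne_empty.2 hne)).ne' hX

theorem exists_isProbWeight_regularW_mea_eq [Fintype Ω] [Nonempty Ω] (hw : ∀ ω, 0 < w ω) :
    ∃ v : Ω → ℝ, IsProbWeight v ∧ RegularW v ∧ ∃ c > 0, ∀ A, mea v A = c * mea w A := by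
  have hc : 0 < ∑ ω, w ω := sum_pos (fun ω _ ↦ hw ω) univ_nonempty
  have hv : ∀ ω, 0 < (∑ ω, w ω)⁻¹ * w ω := fun ω ↦ mul_pos (inv_pos.2 hc) (hw ω)
  refine ⟨fun ω ↦ (∑ ω, w ω)⁻¹ * w ω, ⟨fun ω ↦ (hv ω).le, ?_⟩, regularW_of_pos hv,
    (∑ ω, w ω)⁻¹, inv_pos.2 hc, mea_const_mul _ w⟩
  rw [← mul_sum, inv_mul_cancel₀ hc.ne']

end Normalization

/-- Sufficient conditions for joint representation: axioms (A0), (A1), (A2)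
and (Scott) entail the existence of a regular probability measure jointly representing
`<` and `≤`. -/
theorem stmt2 [Fintype Ω] [Nonempty Ω]
    (lt le : Finset Ω → Finset Ω → Prop)
    (hA0 : ∀ ω : Ω, lt ∅ {ω})
    (hA1 : ∀ A B : Finset Ω, le A B → ¬ lt B A)
    (hA2 : ∀ A B : Finset Ω, lt A B → le A B)
    (hScott : ∀ n : ℕ, ∀ A B : Fin (n + 1) → Finset Ω, BalancedSeq A B →
      (∀ i, le (B i) (A i)) → ∀ i, le (A i) (B i)) :
    ∃ w : Ω → ℝ, IsProbWeight w ∧ RegularW w ∧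
      (∀ A B : Finset Ω, lt A B → mea w A < mea w B) ∧
      (∀ A B : Finset Ω, le A B → mea w A ≤ mea w B) := by
  have hS : ScottCancellation le := hScott
  obtain ⟨x, hx_lt, hx_le⟩ := hS.exists_weight hA1 hA2
  have hx_pos : ∀ ω, 0 < (x ω : ℝ) := fun ω ↦ by
    simpa [weightOn_apply] using hx_lt ∅ {ω} (hA0 ω)
  obtain ⟨w, hw, hreg, c, hc, hmea⟩ := exists_isProbWeight_regularW_mea_eq hx_pos
  refine ⟨w, hw, hreg, fun A B h ↦ ?_, fun A B h ↦ ?_⟩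
  · rw [hmea, hmea, mea_ratCast, mea_ratCast]
    exact mul_lt_mul_of_pos_left (Rat.cast_lt.2 (hx_lt A B h)) hc
  · rw [hmea, hmea, mea_ratCast, mea_ratCast]
    exact mul_le_mul_of_nonneg_left (Rat.cast_le.2 (hx_le A B h)) hc.le
end

section
/- Let Ω be a finite nonempty set, μ a regular probability measure on Ω, and σ a selection function on Ω that μ represents for threshold 1/2. Then the (Scott) axiom holds for σ: whenever (A_i)_{i≤n} ≡₀ (B_i)_{i≤n} and A_i ⪰*_σ B_i for all i ≤ n, then A_i ⪯*_σ B_i for all i ≤ n. -/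
open Finset

variable {Ω : Type*}

/-!
For a nonnegative weight and threshold `1/2`, `a ≻_σ X` says exactly that `μ(X) < μ({a})`, so
`A ⪰*_σ B` is an inequality between `μ(A)` and `μ(B)`, strict unless `B` is a singleton. In a
balanced pair of sequences both sides have the same total measure, so all these inequalities are
equalities and every `B_i` is a singleton. By regularity every `A_i` is nonempty; since both sides
also have the same total cardinality, every `A_i` is a singleton too, and the inequalities may be
reversed.
-/

section Measure

variable {w : Ω → ℝ} {A B : Finset Ω}

theorem mea_singleton (w : Ω → ℝ) (a : Ω) : mea w {a} = w a :=
  sum_singleton w a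

theorem mea_union_singleton [DecidableEq Ω] (w : Ω → ℝ) {X : Finset Ω} {a : Ω} (ha : a ∉ X) :
    mea w (X ∪ {a}) = mea w X + w a := by
  rw [mea, sum_union (disjoint_singleton_right.2 ha), sum_singleton, mea]

theorem mea_nonneg (hw : ∀ ω, 0 ≤ w ω) (A : Finset Ω) : 0 ≤ mea w A :=
  sum_nonneg fun ω _ => hw ω

theorem mea_mono (hw : ∀ ω, 0 ≤ w ω) (h : A ⊆ B) : mea w A ≤ mea w B :=
  sum_le_sum_of_subset_of_nonneg h fun ω _ _ => hw ω

theorem weight_le_mea (hw : ∀ ω, 0 ≤ w ω) {a : Ω} (ha : a ∈ A) : w a ≤ mea w A :=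
  single_le_sum (fun ω _ => hw ω) ha

end Measure

section Selection

variable [DecidableEq Ω] {w : Ω → ℝ} {σ : Finset Ω → Finset Ω} {t : ℝ} {a : Ω}
  {A B E S X : Finset Ω}

theorem IsLeastStable.eq_singleton_iff {m : Finset Ω → ℝ} (h : IsLeastStable m t S) :
    S = {a} ↔ StableFor m t {a} :=
  ⟨fun hS => hS ▸ h.1, fun ha => h.1.1.subset_singleton_iff.1 (h.2 _ ha)⟩

theorem condMea_div_condMea (hE : mea w E ≠ 0) (A B : Finset Ω) :
    condMea w E A / condMea w E B = mea w (E ∩ A) / mea w (E ∩ B) :=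
  div_div_div_cancel_right₀ hE _ _

theorem stableFor_condMea_singleton_iff (hw : ∀ ω, 0 ≤ w ω) (ht : 0 ≤ t) (ha : a ∈ E)
    (hE : 0 < mea w E) : StableFor (condMea w E) t {a} ↔ t * mea w E < w a := by
  have ratio {F : Finset Ω} (haF : a ∈ F) :
      condMea w E ({a} ∩ F) / condMea w E F = w a / mea w (E ∩ F) := by
    rw [condMea_div_condMea hE.ne', singleton_inter_of_mem haF, inter_singleton_of_mem ha,
      mea_singleton]
  constructor
  · rintro ⟨-, h⟩
    have hEE : 0 < condMea w E E := by
      rw [condMea, inter_self]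
      exact div_pos hE hE
    have := h E ⟨a, by simpa using ha⟩ hEE
    rwa [ratio ha, inter_self, lt_div_iff₀ hE] at this
  · refine fun h => ⟨singleton_nonempty a, fun F hF hpos => ?_⟩
    have haF : a ∈ F := by
      simpa only [← not_disjoint_iff_nonempty_inter, disjoint_singleton_left, not_not] using hF
    have hEF : 0 < mea w (E ∩ F) := (div_pos_iff_of_pos_right hE).1 hpos
    rw [ratio haF, lt_div_iff₀ hEF]
    calc t * mea w (E ∩ F) ≤ t * mea w E :=
          mul_le_mul_of_nonneg_left (mea_mono hw inter_subset_left) ht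
      _ < w a := h

theorem RepresentsAt.eq_singleton_iff (hrep : RepresentsAt w t σ) (hw : ∀ ω, 0 ≤ w ω)
    (ht : 0 ≤ t) (ha : a ∈ E) : σ E = {a} ↔ t * mea w E < w a := by
  rcases (mea_nonneg hw E).eq_or_lt with hE | hE
  · have hle : w a ≤ t * mea w E := by
      simpa only [← hE, mul_zero] using weight_le_mea hw ha
    simp only [(hrep E).2 hE.symm, (singleton_ne_empty a).symm, hle.not_gt]
  · rw [((hrep E).1 hE).eq_singleton_iff, stableFor_condMea_singleton_iff hw ht ha hE]

theorem RepresentsAt.succS_iff (hrep : RepresentsAt w (1 / 2) σ) (hw : ∀ ω, 0 ≤ w ω) :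
    succS σ a X ↔ mea w X < w a := by
  by_cases ha : a ∈ X
  · simp only [succS, ha, not_true_eq_false, false_and, (weight_le_mea hw ha).not_gt]
  · rw [succS, hrep.eq_singleton_iff hw (by norm_num) (by simp), mea_union_singleton w ha]
    constructor
    · rintro ⟨-, h⟩
      linarith
    · exact fun h => ⟨ha, by linarith⟩

theorem succeqS_iff_not_succS : succeqS σ X a ↔ ¬ succS σ a X := by
  rw [succeqS, succS, not_and_or, not_not]

theorem RepresentsAt.succeqS_iff (hrep : RepresentsAt w (1 / 2) σ) (hw : ∀ ω, 0 ≤ w ω) :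
    succeqS σ X a ↔ w a ≤ mea w X := by
  rw [succeqS_iff_not_succS, hrep.succS_iff hw, not_lt]

theorem RepresentsAt.geStar_iff (hrep : RepresentsAt w (1 / 2) σ) (hw : ∀ ω, 0 ≤ w ω) :
    geStar σ A B ↔ #A = 1 ∧ mea w B < mea w A ∨ #B = 1 ∧ mea w B ≤ mea w A := by
  simp only [geStar, hrep.succS_iff hw, hrep.succeqS_iff hw, card_eq_one, ← mea_singleton w]
  grind

end Selection

section Balanced

variable {n : ℕ} {A B : Fin n → Finset Ω}

theorem count_sum_val [DecidableEq Ω] {ι : Type*} [Fintype ι] (A : ι → Finset Ω) (ω : Ω) :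
    (∑ i, (A i).val).count ω = Nat.card {i // ω ∈ A i} := by
  simp only [Multiset.count_sum', Multiset.count_eq_of_nodup (nodup _), mem_val, sum_boole,
    Nat.cast_id, Nat.card_eq_fintype_card, Fintype.card_subtype]

theorem BalancedSeq.sum_val_eq (h : BalancedSeq A B) :
    ∑ i, (A i).val = ∑ i, (B i).val := by
  classical
  ext ω
  rw [count_sum_val, count_sum_val, h ω]

theorem BalancedSeq.sum_sum_eq {M : Type*} [AddCommMonoid M] (h : BalancedSeq A B) (f : Ω → M) :
    ∑ i, ∑ ω ∈ A i, f ω = ∑ i, ∑ ω ∈ B i, f ω := by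
  have sum_eq (C : Fin n → Finset Ω) :
      ∑ i, ∑ ω ∈ C i, f ω = ((∑ i, (C i).val).map f).sum := by
    rw [← Multiset.coe_mapAddMonoidHom, map_sum, ← Multiset.coe_sumAddMonoidHom, map_sum]
    rfl
  rw [sum_eq, sum_eq, h.sum_val_eq]

theorem BalancedSeq.sum_eq_of_le {M : Type*} [AddCommMonoid M] [PartialOrder M]
    [IsOrderedCancelAddMonoid M] (h : BalancedSeq A B) (f : Ω → M)
    (hle : ∀ i, ∑ ω ∈ B i, f ω ≤ ∑ ω ∈ A i, f ω) (i : Fin n) :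
    ∑ ω ∈ B i, f ω = ∑ ω ∈ A i, f ω :=
  (sum_eq_sum_iff_of_le fun i _ => hle i).1 (h.sum_sum_eq f).symm i (mem_univ i)

theorem BalancedSeq.mea_eq_of_le (h : BalancedSeq A B) {w : Ω → ℝ}
    (hle : ∀ i, mea w (B i) ≤ mea w (A i)) (i : Fin n) : mea w (B i) = mea w (A i) :=
  h.sum_eq_of_le w hle i

theorem BalancedSeq.card_eq_of_le (h : BalancedSeq A B) (hle : ∀ i, #(B i) ≤ #(A i))
    (i : Fin n) : #(B i) = #(A i) := by
  simp only [card_eq_sum_ones] at hle ⊢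
  exact h.sum_eq_of_le (fun _ => 1) hle i

end Balanced

theorem RegularW.nonempty_of_mea_eq {w : Ω → ℝ} (hreg : RegularW w) {A B : Finset Ω}
    (hB : B.Nonempty) (h : mea w B = mea w A) : A.Nonempty := by
  rw [nonempty_iff_ne_empty]
  rintro rfl
  exact hB.ne_empty (hreg B (by rw [h, mea, sum_empty]))

theorem stmt11_general [DecidableEq Ω] (w : Ω → ℝ) (hw : ∀ ω, 0 ≤ w ω) (hreg : RegularW w)
    (σ : Finset Ω → Finset Ω) (hrep : RepresentsAt w (1 / 2) σ) : ScottAx σ := by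
  intro n A B hbal hge
  have hcmp i := (hrep.geStar_iff hw).1 (hge i)
  have hmea : ∀ i, mea w (B i) = mea w (A i) :=
    hbal.mea_eq_of_le fun i => (hcmp i).elim (fun h => h.2.le) fun h => h.2
  have hcardB i : #(B i) = 1 :=
    ((hcmp i).resolve_left fun h => h.2.ne (hmea i)).1
  have hneA i : (A i).Nonempty :=
    hreg.nonempty_of_mea_eq (card_pos.1 (by simp only [hcardB, zero_lt_one])) (hmea i)
  have hcard : ∀ i, #(B i) = #(A i) :=
    hbal.card_eq_of_le fun i => (hcardB i).trans_le (hneA i).card_pos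
  exact fun i => (hrep.geStar_iff hw).2 (Or.inr ⟨hcard i ▸ hcardB i, (hmea i).ge⟩)

/-- soundness of the (Scott) axiom: if a regular probability measure
represents `σ` for threshold 1/2, then the (Scott) axiom holds for `σ`. -/
theorem stmt11 [Fintype Ω] [DecidableEq Ω] [Nonempty Ω]
    (w : Ω → ℝ) (hw : IsProbWeight w) (hreg : RegularW w)
    (σ : Finset Ω → Finset Ω) (hrep : RepresentsAt w (1 / 2) σ) :
    ScottAx σ :=
  stmt11_general w hw.1 hreg σ hrep
end
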